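/- Let K ∈ ℝ, N ∈ (1,∞), D ∈ (0,∞), and let h be an MCP(K,N) density whose support has diameter at most D. Then λ[h] ≥ λ[h_{K,N,D}] if K ≤ 0, and λ[h] ≥ inf_{D' ∈ (0, min(D, D_{K,N})]} λ[h_{K,N,D'}] if K > 0. -/

import Mathlib

open MeasureTheory Filter

/-- The function `s_κ` from the paper. -/
noncomputable def sKappa (κ θ : ℝ) : ℝ :=
  if 0 < κ then Real.sin (Real.sqrt κ * θ) / Real.sqrt κ
  else if κ < 0 then Real.sinh (Real.sqrt (-κ) * θ) / Real.sqrt (-κ)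
  else θ

/-- The support of the measure `h · 𝓛¹`. -/
noncomputable def measSupport (h : ℝ → ℝ) : Set ℝ :=
  {x : ℝ | ∀ ε > 0,
    0 < (MeasureTheory.volume.withDensity (fun y => ENNReal.ofReal (h y))) (Metric.ball x ε)}

/-- A one-dimensional `MCP(K,N)` density. -/
def IsMCPDensity (K N : ℝ) (h : ℝ → ℝ) : Prop :=
  (∀ x, 0 ≤ h x) ∧ MeasureTheory.LocallyIntegrable h MeasureTheory.volume ∧
  ∀ x₀ ∈ measSupport h, ∀ x₁ ∈ measSupport h,
    (0 < K → x₀ ≠ x₁ → |x₁ - x₀| < Real.pi / Real.sqrt (K / (N - 1))) ∧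
    ∀ t ∈ Set.Icc (0:ℝ) 1,
      (sKappa (K / (N - 1)) ((1 - t) * |x₁ - x₀|) / sKappa (K / (N - 1)) |x₁ - x₀|) ^ (N - 1)
          * h x₀
        ≤ h (t * x₁ + (1 - t) * x₀)

/-- The model density `h_{K,N,D}`. -/
noncomputable def modelDensity (K N D : ℝ) (x : ℝ) : ℝ :=
  if x ∈ Set.Icc 0 (D / 2) then sKappa (K / (N - 1)) (D - x) ^ (N - 1)
  else if x ∈ Set.Icc (D / 2) D then sKappa (K / (N - 1)) x ^ (N - 1)
  else 0

/-- Locally Lipschitz functions on a subset `I` of the reals. -/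
def LocLipschitzOn (f : ℝ → ℝ) (I : Set ℝ) : Prop :=
  ∀ x ∈ I, ∃ ε > 0, ∃ C : NNReal, LipschitzOnWith C f (I ∩ Metric.ball x ε)

/-- The local Lipschitz slope `|∇f|(x)` relative to `I`. -/
noncomputable def slopeOn (f : ℝ → ℝ) (I : Set ℝ) (x : ℝ) : ℝ :=
  Filter.limsup (fun y => |f y - f x| / |y - x|) (nhdsWithin x (I \ {x}))

/-- The Poincaré constant `λ[h, I]` of the density `h` on `I`. -/
noncomputable def poincareConst (h : ℝ → ℝ) (I : Set ℝ) : ℝ :=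
  sInf { r : ℝ | ∃ f : ℝ → ℝ, LocLipschitzOn f I ∧
    (∫ x in I, f x * h x) = 0 ∧
    (0 < ∫ x in I, (f x) ^ 2 * h x) ∧
    MeasureTheory.IntegrableOn (fun x => (f x) ^ 2 * h x) I ∧
    r = (∫ x in I, (slopeOn f I x) ^ 2 * h x) / (∫ x in I, (f x) ^ 2 * h x) }

lemma slopeOn_univ_of_differentiableAt {f : ℝ → ℝ} {x : ℝ} (hf : DifferentiableAt ℝ f x) :
    slopeOn f Set.univ x = |deriv f x| := by
  have h := hf.hasDerivAt.tendsto_slope.abs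
  have hset : Set.univ \ {x} = ({x} : Set ℝ)ᶜ := by ext; simp
  unfold slopeOn
  rw [hset]
  refine Tendsto.limsup_eq (h.congr fun y => ?_)
  rw [slope_def_field, abs_div]

lemma LocLipschitzOn.locallyLipschitz {f : ℝ → ℝ} (hf : LocLipschitzOn f Set.univ) :
    LocallyLipschitz f := by
  intro x
  obtain ⟨ε, hε, C, hC⟩ := hf x trivial
  exact ⟨C, _, Metric.ball_mem_nhds x hε, by simpa using hC⟩

lemma LipschitzWith.locLipschitzOn {f : ℝ → ℝ} {C : NNReal} (hf : LipschitzWith C f)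
    (I : Set ℝ) : LocLipschitzOn f I :=
  fun _ _ => ⟨1, one_pos, C, hf.lipschitzOnWith⟩

lemma LocallyLipschitz.ae_slopeOn_sq {f : ℝ → ℝ} (hf : LocallyLipschitz f) :
    ∀ᵐ x, slopeOn f Set.univ x ^ 2 = deriv f x ^ 2 := by
  have hbv : LocallyBoundedVariationOn f Set.univ := by
    intro a b _ _
    obtain ⟨C, hC⟩ := LocallyLipschitzOn.exists_lipschitzOnWith_of_compact
      (isCompact_Icc (a := a) (b := b)) (hf.locallyLipschitzOn)
    have := hC.locallyBoundedVariationOn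
    rcases le_or_gt a b with hab | hab
    · simpa using this a b (by simp [hab]) (by simp [hab])
    · simp [BoundedVariationOn, Set.Icc_eq_empty (not_le.mpr hab)]
  filter_upwards [hbv.ae_differentiableAt] with x hx
  rw [slopeOn_univ_of_differentiableAt hx, sq_abs]

lemma poincareConst_nonneg {h : ℝ → ℝ} (hh : ∀ x, 0 ≤ h x) (I : Set ℝ) :
    0 ≤ poincareConst h I := by
  refine Real.sInf_nonneg ?_
  rintro r ⟨f, -, -, hpos, -, rfl⟩
  exact div_nonneg (integral_nonneg fun x => mul_nonneg (sq_nonneg _) (hh x)) hpos.le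

lemma poincareConst_mul_le {h f : ℝ → ℝ} (hh : ∀ x, 0 ≤ h x) {C : NNReal}
    (hf : LipschitzWith C f) (hmean : ∫ x, f x * h x = 0)
    (hint : Integrable (fun x => f x ^ 2 * h x)) :
    poincareConst h Set.univ * ∫ x, f x ^ 2 * h x ≤ ∫ x, deriv f x ^ 2 * h x := by
  have hnn : 0 ≤ ∫ x, f x ^ 2 * h x :=
    integral_nonneg fun x => mul_nonneg (sq_nonneg _) (hh x)
  rcases hnn.eq_or_lt with h0 | hpos
  · rw [← h0, mul_zero]
    exact integral_nonneg fun x => mul_nonneg (sq_nonneg _) (hh x)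
  rw [← le_div_iff₀ hpos]
  refine csInf_le ⟨0, ?_⟩ ⟨f, hf.locLipschitzOn _, by simpa using hmean, by simpa using hpos,
    by simpa using hint, ?_⟩
  · rintro r ⟨f, -, -, hpos, -, rfl⟩
    exact div_nonneg (integral_nonneg fun x => mul_nonneg (sq_nonneg _) (hh x)) hpos.le
  · simp only [Measure.restrict_univ]
    congr 1
    refine integral_congr_ae ?_
    filter_upwards [hf.locallyLipschitz.ae_slopeOn_sq] with x hx
    rw [hx]

/-- Layer-cake form of the second mean value theorem: a density whose primitive is nonnegative
stays nonnegative in the mean after multiplication by a bounded nonincreasing weight. -/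
lemma intervalIntegral_mul_nonneg_of_antitoneOn {p ρ : ℝ → ℝ} {c d M : ℝ} (hcd : c ≤ d)
    (hp : IntegrableOn p (Set.Ioo c d)) (hP : ∀ r ∈ Set.Icc c d, 0 ≤ ∫ x in c..r, p x)
    (hρ : AntitoneOn ρ (Set.Ioo c d)) (h0 : ∀ x ∈ Set.Ioo c d, 0 ≤ ρ x)
    (hM : ∀ x ∈ Set.Ioo c d, ρ x ≤ M) : 0 ≤ ∫ x in c..d, p x * ρ x := by
  obtain ⟨σ, hσ, hσρ⟩ := hρ.exists_antitone_extension
    ⟨0, by rintro _ ⟨x, hx, rfl⟩; exact h0 x hx⟩ ⟨M, by rintro _ ⟨x, hx, rfl⟩; exact hM x hx⟩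
  rw [intervalIntegral.integral_of_le hcd, integral_Ioc_eq_integral_Ioo]
  set S : Set (ℝ × ℝ) := {z | z.2 < σ z.1} with hS
  have hSm : MeasurableSet S := measurableSet_lt measurable_snd (hσ.measurable.comp measurable_fst)
  have hint : Integrable (Function.uncurry fun y t => S.indicator (fun z => p z.1) (y, t))
      ((volume.restrict (Set.Ioo c d)).prod (volume.restrict (Set.Ioc 0 M))) :=
    (Integrable.comp_fst (μ := volume.restrict (Set.Ioo c d))
      (ν := volume.restrict (Set.Ioc 0 M)) hp).indicator hSm
  have hinner : ∫ y in Set.Ioo c d, p y * ρ y =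
      ∫ y in Set.Ioo c d, ∫ t in Set.Ioc 0 M, S.indicator (fun z => p z.1) (y, t) := by
    refine setIntegral_congr_fun measurableSet_Ioo fun y hy => ?_
    have hy0 := h0 y hy
    have hyM := hM y hy
    have hyσ := hσρ hy
    have : (fun t => S.indicator (fun z => p z.1) (y, t)) =
        (Set.Iio (ρ y)).indicator fun _ => p y := by
      ext t
      simp [Set.indicator, hS, hyσ]
    have hset : Set.Ioc 0 M ∩ Set.Iio (ρ y) = Set.Ioo 0 (ρ y) := by
      ext t
      simp only [Set.mem_inter_iff, Set.mem_Ioc, Set.mem_Iio, Set.mem_Ioo]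
      constructor
      · rintro ⟨⟨h1, -⟩, h2⟩; exact ⟨h1, h2⟩
      · rintro ⟨h1, h2⟩; exact ⟨⟨h1, by linarith⟩, h2⟩
    simp only [this]
    rw [setIntegral_indicator measurableSet_Iio, hset, setIntegral_const]
    simp [Measure.real, hy0, mul_comm]
  rw [hinner, integral_integral_swap hint]
  refine integral_nonneg fun t => ?_
  have hlow : (fun y => S.indicator (fun z => p z.1) (y, t)) =
      {y | t < σ y}.indicator p := by
    ext y
    simp [Set.indicator, hS]
  simp only [hlow]
  have htm : MeasurableSet {y | t < σ y} := measurableSet_lt measurable_const hσ.measurable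
  rw [Pi.zero_apply, setIntegral_indicator htm]
  set T := Set.Ioo c d ∩ {y | t < σ y} with hT
  rcases T.eq_empty_or_nonempty with hE | hE
  · simp [hE]
  have hbdd : BddAbove T := ⟨d, fun y hy => hy.1.2.le⟩
  obtain ⟨y₀, hy₀⟩ := hE
  have hr1 : y₀ ≤ sSup T := le_csSup hbdd hy₀
  have hr2 : sSup T ≤ d := csSup_le ⟨y₀, hy₀⟩ fun y hy => hy.1.2.le
  have hrc : c ≤ sSup T := hy₀.1.1.le.trans hr1
  have hae : T =ᵐ[volume] Set.Ioc c (sSup T) := by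
    have h1 : Set.Ioo c (sSup T) ⊆ T := by
      intro y hy
      obtain ⟨y', hy', hlt⟩ := exists_lt_of_lt_csSup ⟨y₀, hy₀⟩ hy.2
      exact ⟨⟨hy.1, hlt.trans hy'.1.2⟩, lt_of_lt_of_le hy'.2 (hσ hlt.le)⟩
    have h2 : T ⊆ Set.Ioc c (sSup T) := fun y hy => ⟨hy.1.1, le_csSup hbdd hy⟩
    exact h2.eventuallyLE.antisymm (Ioo_ae_eq_Ioc.symm.le.trans h1.eventuallyLE)
  rw [setIntegral_congr_set hae, ← intervalIntegral.integral_of_le hrc]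
  exact hP _ ⟨hrc, hr2⟩

lemma sKappa_zero (κ : ℝ) : sKappa κ 0 = 0 := by
  unfold sKappa
  split_ifs <;> simp

lemma continuous_sKappa (κ : ℝ) : Continuous (sKappa κ) := by
  unfold sKappa
  split_ifs <;> fun_prop

lemma sKappa_pos {κ θ : ℝ} (hθ : 0 < θ) (hκ : 0 < κ → θ < Real.pi / Real.sqrt κ) :
    0 < sKappa κ θ := by
  unfold sKappa
  split_ifs with h1 h2
  · have hs := Real.sqrt_pos.mpr h1
    have := (lt_div_iff₀ hs).mp (hκ h1)
    exact div_pos (Real.sin_pos_of_pos_of_lt_pi (by positivity) (by linarith)) hs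
  · have hs := Real.sqrt_pos.mpr (neg_pos.mpr h2)
    exact div_pos (Real.sinh_pos_iff.mpr (by positivity)) hs
  · exact hθ

lemma sKappa_nonneg {κ θ : ℝ} (hθ : 0 ≤ θ) (hκ : 0 < κ → θ ≤ Real.pi / Real.sqrt κ) :
    0 ≤ sKappa κ θ := by
  rcases hθ.eq_or_lt with h0 | h0
  · rw [← h0, sKappa_zero]
  by_cases hlt : 0 < κ → θ < Real.pi / Real.sqrt κ
  · exact (sKappa_pos h0 hlt).le
  push Not at hlt
  have hs := Real.sqrt_pos.mpr hlt.1
  rw [sKappa, if_pos hlt.1, (hκ hlt.1).antisymm hlt.2, mul_div_cancel₀ _ hs.ne', Real.sin_pi,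
    zero_div]

lemma mul_cosh_mul_sinh_le {α y : ℝ} (h0 : 0 ≤ α) (h1 : α ≤ 1) (hy : 0 ≤ y) :
    α * Real.cosh (α * y) * Real.sinh y ≤ Real.sinh (α * y) * Real.cosh y := by
  have hd : ∀ z, HasDerivAt
      (fun z => α * Real.cosh (α * z) * Real.sinh z - Real.sinh (α * z) * Real.cosh z)
      ((α ^ 2 - 1) * (Real.sinh (α * z) * Real.sinh z)) z := by
    intro z
    have hl : HasDerivAt (fun z => α * z) α z := by simpa using (hasDerivAt_id z).const_mul α
    exact (((hl.cosh.const_mul α).mul (Real.hasDerivAt_sinh z)).sub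
      (hl.sinh.mul (Real.hasDerivAt_cosh z))).congr_deriv (by ring)
  have hanti : AntitoneOn
      (fun z => α * Real.cosh (α * z) * Real.sinh z - Real.sinh (α * z) * Real.cosh z)
      (Set.Ici 0) := by
    refine antitoneOn_of_deriv_nonpos (convex_Ici 0)
      (fun z _ => (hd z).continuousAt.continuousWithinAt)
      (fun z _ => (hd z).differentiableAt.differentiableWithinAt) fun z hz => ?_
    rw [interior_Ici] at hz
    rw [(hd z).deriv]
    have hz' : 0 ≤ z := le_of_lt hz
    have := Real.sinh_nonneg_iff.mpr hz'
    have := Real.sinh_nonneg_iff.mpr (mul_nonneg h0 hz')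
    have : α ^ 2 - 1 ≤ 0 := by nlinarith
    exact mul_nonpos_of_nonpos_of_nonneg this (by positivity)
  have := hanti Set.self_mem_Ici hy hy
  simpa using this

lemma sinh_mul_mul_sinh_le {α x y : ℝ} (h0 : 0 ≤ α) (h1 : α ≤ 1) (hx : 0 < x) (hxy : x ≤ y) :
    Real.sinh (α * y) * Real.sinh x ≤ Real.sinh (α * x) * Real.sinh y := by
  have hd : ∀ z ∈ Set.Ioi (0 : ℝ), HasDerivAt (fun z => Real.sinh (α * z) / Real.sinh z)
      ((α * Real.cosh (α * z) * Real.sinh z - Real.sinh (α * z) * Real.cosh z) /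
        Real.sinh z ^ 2) z := by
    intro z hz
    have hl : HasDerivAt (fun z => α * z) α z := by simpa using (hasDerivAt_id z).const_mul α
    exact (hl.sinh.div (Real.hasDerivAt_sinh z) (Real.sinh_pos_iff.mpr hz).ne').congr_deriv
      (by ring)
  have hanti : AntitoneOn (fun z => Real.sinh (α * z) / Real.sinh z) (Set.Ioi 0) := by
    refine antitoneOn_of_deriv_nonpos (convex_Ioi 0)
      (fun z hz => (hd z hz).continuousAt.continuousWithinAt) ?_ ?_
    · rw [interior_Ioi]
      exact fun z hz => (hd z hz).differentiableAt.differentiableWithinAt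
    · rw [interior_Ioi]
      intro z hz
      rw [(hd z hz).deriv]
      exact div_nonpos_of_nonpos_of_nonneg
        (sub_nonpos.mpr (mul_cosh_mul_sinh_le h0 h1 (le_of_lt hz))) (sq_nonneg _)
  have hy := hx.trans_le hxy
  have := hanti (Set.mem_Ioi.mpr hx) (Set.mem_Ioi.mpr hy) hxy
  exact (div_le_div_iff₀ (Real.sinh_pos_iff.mpr hy) (Real.sinh_pos_iff.mpr hx)).mp this

lemma sKappa_mul_mul_le {κ α x y : ℝ} (hκ : κ ≤ 0) (h0 : 0 ≤ α) (h1 : α ≤ 1) (hx : 0 < x)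
    (hxy : x ≤ y) : sKappa κ (α * y) * sKappa κ x ≤ sKappa κ (α * x) * sKappa κ y := by
  unfold sKappa
  rw [if_neg hκ.not_gt, if_neg hκ.not_gt, if_neg hκ.not_gt, if_neg hκ.not_gt]
  split_ifs with h
  · have hs := Real.sqrt_pos.mpr (neg_pos.mpr h)
    rw [div_mul_div_comm, div_mul_div_comm, mul_left_comm, mul_left_comm _ α]
    exact div_le_div_of_nonneg_right
      (sinh_mul_mul_sinh_le h0 h1 (by positivity) (by gcongr)) (by positivity)
  · apply le_of_eq
    ring

lemma modelDensity_nonneg {K N D : ℝ} (hs : ∀ θ ∈ Set.Ioc 0 D, 0 ≤ sKappa (K / (N - 1)) θ)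
    (x : ℝ) : 0 ≤ modelDensity K N D x := by
  have hs' : ∀ θ ∈ Set.Icc 0 D, 0 ≤ sKappa (K / (N - 1)) θ := by
    intro θ hθ
    rcases hθ.1.eq_or_lt with h | h
    · rw [← h, sKappa_zero]
    · exact hs θ ⟨h, hθ.2⟩
  unfold modelDensity
  split_ifs with h1 h2
  · exact Real.rpow_nonneg (hs' _ ⟨by linarith [h1.1, h1.2], by linarith [h1.1]⟩) _
  · exact Real.rpow_nonneg (hs' _ ⟨by linarith [h2.1, h2.2], h2.2⟩) _
  · exact le_rfl

lemma modelDensity_of_mem_Ioc {K N D x : ℝ} (hx : x ∈ Set.Ioc (D / 2) D) :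
    modelDensity K N D x = sKappa (K / (N - 1)) x ^ (N - 1) := by
  unfold modelDensity
  rw [if_neg fun h => absurd h.2 (not_le.mpr hx.1), if_pos ⟨hx.1.le, hx.2⟩]

lemma modelDensity_of_lt {K N D x : ℝ} (hD : 0 ≤ D) (hx : D < x) : modelDensity K N D x = 0 := by
  unfold modelDensity
  rw [if_neg fun h => by linarith [h.2], if_neg fun h => by linarith [h.2]]

lemma modelDensity_sub (K N D x : ℝ) : modelDensity K N D (D - x) = modelDensity K N D x := by
  unfold modelDensity
  simp only [Set.mem_Icc]
  rcases lt_trichotomy x (D / 2) with h | h | h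
  · by_cases h0 : 0 ≤ x
    · rw [if_neg (by rintro ⟨-, _⟩; linarith), if_pos ⟨by linarith, by linarith⟩,
        if_pos ⟨h0, h.le⟩]
    · rw [if_neg (by rintro ⟨-, _⟩; linarith), if_neg (by rintro ⟨-, _⟩; linarith),
        if_neg (by rintro ⟨_, -⟩; linarith), if_neg (by rintro ⟨_, -⟩; linarith)]
  · have : D - x = x := by linarith
    simp only [this]
  · by_cases h0 : x ≤ D
    · rw [if_pos ⟨by linarith, by linarith⟩, if_neg (by rintro ⟨-, _⟩; linarith),
        if_pos ⟨by linarith, by linarith⟩, sub_sub_cancel]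
    · rw [if_neg (by rintro ⟨_, -⟩; linarith), if_neg (by rintro ⟨_, -⟩; linarith),
        if_neg (by rintro ⟨-, _⟩; linarith), if_neg (by rintro ⟨-, _⟩; linarith)]

lemma mul_modelDensity_ae_eq {K N D : ℝ} (hD : 0 < D) {q : ℝ → ℝ} (hq : ∀ y < D / 2, q y = 0) :
    (fun y => q y * modelDensity K N D y) =ᵐ[volume]
      (Set.Ioc (D / 2) D).indicator fun y => q y * sKappa (K / (N - 1)) y ^ (N - 1) := by
  filter_upwards [(measure_eq_zero_iff_ae_notMem.mp (Real.volume_singleton (a := D / 2)))] with y hy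
  rcases lt_or_gt_of_ne hy with h | h
  · rw [hq y h, Set.indicator_of_notMem (fun h' => absurd h'.1 h.not_gt), zero_mul]
  · by_cases h' : y ≤ D
    · rw [Set.indicator_of_mem (show y ∈ Set.Ioc (D / 2) D from ⟨h, h'⟩),
        modelDensity_of_mem_Ioc ⟨h, h'⟩]
    · rw [Set.indicator_of_notMem (fun hy' => h' hy'.2),
        modelDensity_of_lt hD.le (not_le.mp h'), mul_zero]

lemma integral_mul_modelDensity {K N D : ℝ} (hD : 0 < D) {q : ℝ → ℝ} (hq : ∀ y < D / 2, q y = 0) :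
    ∫ y, q y * modelDensity K N D y =
      ∫ y in (D / 2)..D, q y * sKappa (K / (N - 1)) y ^ (N - 1) := by
  rw [integral_congr_ae (mul_modelDensity_ae_eq hD hq), integral_indicator measurableSet_Ioc,
    intervalIntegral.integral_of_le (by linarith)]

lemma LipschitzWith.integrableOn_deriv_sq_mul {φ w : ℝ → ℝ} {C : NNReal} (hφ : LipschitzWith C φ)
    {s : Set ℝ} (hw : IntegrableOn w s) :
    IntegrableOn (fun y => deriv φ y ^ 2 * w y) s := by
  refine Integrable.bdd_mul (c := (C : ℝ) ^ 2) hw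
    ((measurable_deriv φ).pow_const 2).aestronglyMeasurable (Eventually.of_forall fun y => ?_)
  rw [norm_pow]
  have := norm_deriv_le_of_lipschitz (x₀ := y) hφ
  gcongr

lemma continuous_sKappa_rpow (κ : ℝ) {ν : ℝ} (hν : 0 ≤ ν) :
    Continuous fun y => sKappa κ y ^ ν :=
  (continuous_sKappa κ).rpow_const fun _ => Or.inr hν

/-- Odd reflection about the midpoint turns the spectral gap of the model density into a mixed
Dirichlet–Neumann inequality on its right half. -/
lemma poincareConst_modelDensity_mul_le {K N D : ℝ} (hN : 1 < N) (hD : 0 < D)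
    (hs : ∀ θ ∈ Set.Ioc 0 D, 0 < sKappa (K / (N - 1)) θ) {φ : ℝ → ℝ} {C : NNReal}
    (hφ : LipschitzWith C φ) (h0 : ∀ y ≤ D / 2, φ y = 0) :
    poincareConst (modelDensity K N D) Set.univ *
        ∫ y in (D / 2)..D, φ y ^ 2 * sKappa (K / (N - 1)) y ^ (N - 1) ≤
      ∫ y in (D / 2)..D, deriv φ y ^ 2 * sKappa (K / (N - 1)) y ^ (N - 1) := by
  set H := modelDensity K N D with hH
  set w := fun y => sKappa (K / (N - 1)) y ^ (N - 1) with hw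
  have hwc : Continuous w := continuous_sKappa_rpow _ (by linarith)
  have hsym : ∀ x, H (D - x) = H x := modelDensity_sub K N D
  set G := fun y => φ y - φ (D - y) with hG
  have hGlip : LipschitzWith (C + C * 1) G := by
    refine hφ.sub (hφ.comp ?_)
    refine LipschitzWith.of_dist_le_mul fun x y => ?_
    rw [dist_sub_left, NNReal.coe_one, one_mul]
  have hmean : ∫ x, G x * H x = 0 := by
    have h1 := integral_sub_left_eq_self (fun x => G x * H x) volume D
    have h2 : (fun x => G (D - x) * H (D - x)) = fun x => -(G x * H x) := by
      ext x
      simp only [hG, hsym, sub_sub_cancel]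
      ring
    rw [h2, integral_neg] at h1
    linarith
  have h2sum : ∀ q : ℝ → ℝ, (∀ y < D / 2, q y = 0) → IntegrableOn (fun y => q y * w y)
      (Set.Ioc (D / 2) D) → Integrable (fun y => (q y + q (D - y)) * H y) ∧
      ∫ y, (q y + q (D - y)) * H y = 2 * ∫ y in (D / 2)..D, q y * w y := by
    intro q hq hqi
    have hi : Integrable fun y => q y * H y :=
      (integrable_congr (mul_modelDensity_ae_eq hD hq)).mpr
        ((integrable_indicator_iff measurableSet_Ioc).mpr hqi)
    have hi' : Integrable fun y => q (D - y) * H y := by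
      simpa only [hsym] using hi.comp_sub_left D
    have hint : ∫ y, q (D - y) * H y = ∫ y, q y * H y := by
      simpa only [hsym] using integral_sub_left_eq_self (fun x => q x * H x) volume D
    have heq : (fun y => (q y + q (D - y)) * H y) = fun y => q y * H y + q (D - y) * H y := by
      ext y; ring
    rw [heq]
    refine ⟨hi.add hi', ?_⟩
    rw [integral_add hi hi', hint, hH, integral_mul_modelDensity hD hq]
    ring
  have hsq : ∀ y, G y ^ 2 = φ y ^ 2 + φ (D - y) ^ 2 := by
    intro y
    have : φ y * φ (D - y) = 0 := by
      rcases le_total y (D / 2) with h | h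
      · rw [h0 y h, zero_mul]
      · rw [h0 (D - y) (by linarith), mul_zero]
    simp only [hG]
    linear_combination (-2) * this
  have hdφ : ∀ y < D / 2, deriv φ y = 0 := by
    intro y hy
    have : φ =ᶠ[nhds y] fun _ => 0 := by
      filter_upwards [Iio_mem_nhds hy] with z hz using h0 z (le_of_lt hz)
    rw [this.deriv_eq, deriv_const]
  have hdsq : ∀ᵐ y, deriv G y ^ 2 * H y = (deriv φ y ^ 2 + deriv φ (D - y) ^ 2) * H y := by
    filter_upwards
      [(measure_eq_zero_iff_ae_notMem.mp (Real.volume_singleton (a := D / 2)))] with y hy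
    congr 1
    rcases lt_or_gt_of_ne hy with h | h
    · have : G =ᶠ[nhds y] fun z => -φ (D - z) := by
        filter_upwards [Iio_mem_nhds h] with z hz
        simp [hG, h0 z (le_of_lt hz)]
      rw [this.deriv_eq, hdφ y h, deriv.fun_neg, deriv_comp_const_sub]
      ring
    · have : G =ᶠ[nhds y] φ := by
        filter_upwards [Ioi_mem_nhds h] with z hz
        have hz' : D / 2 < z := hz
        simp [hG, h0 (D - z) (by linarith)]
      rw [this.deriv_eq, hdφ (D - y) (by linarith)]
      ring
  have hwi : IntegrableOn w (Set.Ioc (D / 2) D) :=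
    (hwc.continuousOn.integrableOn_Icc).mono_set Set.Ioc_subset_Icc_self
  obtain ⟨hA1, hA2⟩ := h2sum (fun y => φ y ^ 2) (fun y hy => by simp [h0 y hy.le])
    ((((hφ.continuous.pow 2).mul hwc).continuousOn.integrableOn_Icc).mono_set
      Set.Ioc_subset_Icc_self)
  obtain ⟨-, hB2⟩ := h2sum (fun y => deriv φ y ^ 2) (fun y hy => by simp [hdφ y hy])
    (hφ.integrableOn_deriv_sq_mul hwi)
  have key := poincareConst_mul_le (h := H) (modelDensity_nonneg fun θ hθ => (hs θ hθ).le) hGlip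
    hmean (by simpa only [hsq] using hA1)
  rw [integral_congr_ae hdsq, hB2] at key
  simp only [hsq] at key
  rw [hA2] at key
  linarith

lemma poincareConst_modelDensity_mul_le_of_le {K N D : ℝ} (hN : 1 < N) (hD : 0 < D)
    (hs : ∀ θ ∈ Set.Ioc 0 D, 0 < sKappa (K / (N - 1)) θ) {φ : ℝ → ℝ} {C : NNReal}
    (hφ : LipschitzWith C φ) (h0 : ∀ y ≤ D / 2, φ y = 0) {r : ℝ} (hr : r ∈ Set.Icc (D / 2) D) :
    poincareConst (modelDensity K N D) Set.univ *
        ∫ y in (D / 2)..r, φ y ^ 2 * sKappa (K / (N - 1)) y ^ (N - 1) ≤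
      ∫ y in (D / 2)..r, deriv φ y ^ 2 * sKappa (K / (N - 1)) y ^ (N - 1) := by
  set w := fun y => sKappa (K / (N - 1)) y ^ (N - 1) with hw
  have hwc : Continuous w := continuous_sKappa_rpow _ (by linarith)
  have hψ : LipschitzWith (C * 1) fun y => φ (min y r) :=
    hφ.comp (LipschitzWith.id.min_const r)
  have key := poincareConst_modelDensity_mul_le hN hD hs hψ fun y hy =>
    h0 _ ((min_le_left _ _).trans hy)
  have hnn : 0 ≤ poincareConst (modelDensity K N D) Set.univ :=
    poincareConst_nonneg (modelDensity_nonneg fun θ hθ => (hs θ hθ).le) _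
  have hint1 : ∀ a b, IntervalIntegrable (fun y => φ (min y r) ^ 2 * w y) volume a b :=
    fun a b => (((hψ.continuous.pow 2).mul hwc)).intervalIntegrable a b
  have hint2 : ∀ a b, IntervalIntegrable
      (fun y => deriv (fun z => φ (min z r)) y ^ 2 * w y) volume a b := fun a b =>
    ⟨hψ.integrableOn_deriv_sq_mul (hwc.intervalIntegrable a b).1,
      hψ.integrableOn_deriv_sq_mul (hwc.intervalIntegrable a b).2⟩
  have e1 : ∫ y in (D / 2)..r, φ y ^ 2 * w y = ∫ y in (D / 2)..r, φ (min y r) ^ 2 * w y := by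
    refine intervalIntegral.integral_congr fun y hy => ?_
    rw [Set.uIcc_of_le hr.1] at hy
    simp [min_eq_left hy.2]
  have e2 : ∫ y in (D / 2)..r, deriv (fun z => φ (min z r)) y ^ 2 * w y =
      ∫ y in (D / 2)..r, deriv φ y ^ 2 * w y := by
    rw [intervalIntegral.integral_of_le hr.1, intervalIntegral.integral_of_le hr.1,
      integral_Ioc_eq_integral_Ioo, integral_Ioc_eq_integral_Ioo]
    refine setIntegral_congr_fun measurableSet_Ioo fun y hy => ?_
    have : (fun z => φ (min z r)) =ᶠ[nhds y] φ := by
      filter_upwards [Iio_mem_nhds hy.2] with z hz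
      rw [min_eq_left (le_of_lt hz)]
    simp only [this.deriv_eq]
  have e3 : ∫ y in r..D, deriv (fun z => φ (min z r)) y ^ 2 * w y = 0 := by
    rw [intervalIntegral.integral_of_le hr.2]
    refine setIntegral_eq_zero_of_forall_eq_zero fun y hy => ?_
    have : (fun z => φ (min z r)) =ᶠ[nhds y] fun _ => φ r := by
      filter_upwards [Ioi_mem_nhds hy.1] with z hz
      rw [min_eq_right (le_of_lt hz)]
    simp [this.deriv_eq]
  have e4 : 0 ≤ ∫ y in r..D, φ (min y r) ^ 2 * w y := by
    refine intervalIntegral.integral_nonneg hr.2 fun y hy => mul_nonneg (sq_nonneg _) ?_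
    exact Real.rpow_nonneg (hs y ⟨by linarith [hr.1, hy.1], hy.2⟩).le _
  rw [← intervalIntegral.integral_add_adjacent_intervals (hint1 (D / 2) r) (hint1 r D),
    ← intervalIntegral.integral_add_adjacent_intervals (hint2 (D / 2) r) (hint2 r D),
    e3, add_zero, e2, ← e1, mul_add] at key
  linarith [mul_nonneg hnn e4]

lemma antitoneOn_div_sKappa_rpow {κ ν D α a b : ℝ} (hν : 0 < ν)
    (hs : ∀ θ ∈ Set.Ioc 0 D, 0 < sKappa κ θ) (hα : α ∈ Set.Ioc (0 : ℝ) 1)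
    (hratio : ∀ x y, 0 < x → x ≤ y → sKappa κ (α * y) * sKappa κ x ≤ sKappa κ (α * x) * sKappa κ y)
    (hab : b - a = α * D) {h : ℝ → ℝ} (hh : ∀ x, 0 ≤ h x)
    (hmono : ∀ x y, a < x → x ≤ y → y < b →
      (sKappa κ (x - a) / sKappa κ (y - a)) ^ ν * h y ≤ h x) :
    AntitoneOn (fun y => h (a + α * y) / sKappa κ y ^ ν) (Set.Ioo 0 D) := by
  intro x hx y hy hxy
  have hmul : ∀ z ∈ Set.Ioo 0 D, α * z ∈ Set.Ioc 0 D := fun z hz =>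
    ⟨mul_pos hα.1 hz.1, by nlinarith [hz.1, hz.2, hα.2]⟩
  have hsx := hs x ⟨hx.1, hx.2.le⟩
  have hsy := hs y ⟨hy.1, hy.2.le⟩
  have hsαx := hs _ (hmul x hx)
  have hsαy := hs _ (hmul y hy)
  have h1 := hmono (a + α * x) (a + α * y) (by linarith [mul_pos hα.1 hx.1])
    (by nlinarith [hα.1]) (by nlinarith [hα.1, hy.2])
  rw [add_sub_cancel_left, add_sub_cancel_left] at h1
  have h2 : (sKappa κ x / sKappa κ y) ^ ν ≤ (sKappa κ (α * x) / sKappa κ (α * y)) ^ ν := by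
    refine Real.rpow_le_rpow (by positivity) ?_ hν.le
    rw [div_le_div_iff₀ hsy hsαy]
    linarith [hratio x y hx.1 hxy]
  have h3 := (mul_le_mul_of_nonneg_right h2 (hh (a + α * y))).trans h1
  have hpx := Real.rpow_pos_of_pos hsx ν
  have hpy := Real.rpow_pos_of_pos hsy ν
  rw [Real.div_rpow hsx.le hsy.le, div_mul_eq_mul_div, div_le_iff₀ hpy] at h3
  simp only
  rw [div_le_div_iff₀ hpy hpx]
  linarith

/-- Mixed Dirichlet–Neumann inequality on the right half of an interval carrying a density which
is less expanding than a rescaled model density. -/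
lemma poincareConst_mul_le_right_half {K N D α a b : ℝ} (hN : 1 < N) (hD : 0 < D)
    (hs : ∀ θ ∈ Set.Ioc 0 D, 0 < sKappa (K / (N - 1)) θ) (hα : α ∈ Set.Ioc (0 : ℝ) 1)
    (hratio : ∀ x y, 0 < x → x ≤ y → sKappa (K / (N - 1)) (α * y) * sKappa (K / (N - 1)) x ≤
      sKappa (K / (N - 1)) (α * x) * sKappa (K / (N - 1)) y)
    (hab : b - a = α * D) {h : ℝ → ℝ} (hh : ∀ x, 0 ≤ h x) (hhi : Integrable h)
    (hmono : ∀ x y, a < x → x ≤ y → y < b →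
      (sKappa (K / (N - 1)) (x - a) / sKappa (K / (N - 1)) (y - a)) ^ (N - 1) * h y ≤ h x)
    {f : ℝ → ℝ} {C : NNReal} (hf : LipschitzWith C f) :
    poincareConst (modelDensity K N D) Set.univ *
        ∫ x in ((a + b) / 2)..b, (f x - f ((a + b) / 2)) ^ 2 * h x ≤
      ∫ x in ((a + b) / 2)..b, deriv f x ^ 2 * h x := by
  obtain ⟨hα0, hα1⟩ := hα
  set lam := poincareConst (modelDensity K N D) Set.univ with hlam
  set m := (a + b) / 2 with hm
  set w := fun y => sKappa (K / (N - 1)) y ^ (N - 1) with hw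
  have hwc : Continuous w := continuous_sKappa_rpow _ (by linarith)
  have hwpos : ∀ y ∈ Set.Ioc 0 D, 0 < w y := fun y hy => Real.rpow_pos_of_pos (hs y hy) _
  have hmα : a + α * (D / 2) = m := by rw [hm]; linarith
  have hbα : a + α * D = b := by linarith
  have hmb : m ≤ b := by nlinarith
  set φ := fun y => f (a + α * max y (D / 2)) - f m with hφdef
  obtain ⟨C', hφ⟩ : ∃ C', LipschitzWith C' φ := by
    have h1 : LipschitzWith ⟨α, hα0.le⟩ fun z : ℝ => a + α * z := by
      refine LipschitzWith.of_dist_le_mul fun x y => ?_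
      rw [dist_add_left, Real.dist_eq, Real.dist_eq, ← mul_sub, abs_mul, abs_of_pos hα0]
      rfl
    exact ⟨_, (hf.comp (h1.comp (LipschitzWith.id.max_const (D / 2)))).sub
      (LipschitzWith.const (f m))⟩
  have hφ0 : ∀ y ≤ D / 2, φ y = 0 := fun y hy => by
    simp only [hφdef, max_eq_right hy, hmα, sub_self]
  have hdφ : ∀ y ∈ Set.Ioo (D / 2) D, deriv φ y = α * deriv f (a + α * y) := by
    intro y hy
    have : φ =ᶠ[nhds y] fun z => f (a + α * z) - f m := by
      filter_upwards [Ioi_mem_nhds hy.1] with z hz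
      simp only [hφdef, max_eq_left (le_of_lt (Set.mem_Ioi.mp hz))]
    rw [this.deriv_eq, deriv_sub_const]
    have h1 := deriv_comp_mul_left α (fun z => f (a + z)) y
    rw [deriv_comp_const_add, smul_eq_mul] at h1
    exact h1
  have hwi : IntegrableOn w (Set.Ioc (D / 2) D) :=
    (hwc.continuousOn.integrableOn_Icc).mono_set Set.Ioc_subset_Icc_self
  have hi1 : IntegrableOn (fun y => deriv φ y ^ 2 * w y) (Set.Ioc (D / 2) D) :=
    hφ.integrableOn_deriv_sq_mul hwi
  have hi2 : IntegrableOn (fun y => lam * (φ y ^ 2 * w y)) (Set.Ioc (D / 2) D) :=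
    ((((hφ.continuous.pow 2).mul hwc).continuousOn.integrableOn_Icc).mono_set
      Set.Ioc_subset_Icc_self).const_mul lam
  have hanti := antitoneOn_div_sKappa_rpow (by linarith : (0 : ℝ) < N - 1) hs ⟨hα0, hα1⟩ hratio
    hab hh hmono
  have hmain : 0 ≤ ∫ y in (D / 2)..D, (deriv φ y ^ 2 * w y - lam * (φ y ^ 2 * w y)) *
      (h (a + α * y) / w y) := by
    have hsub : Set.Ioo (D / 2) D ⊆ Set.Ioo 0 D := Set.Ioo_subset_Ioo_left (by linarith)
    have hmid : D / 2 ∈ Set.Ioo 0 D := ⟨by linarith, by linarith⟩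
    refine intervalIntegral_mul_nonneg_of_antitoneOn (by linarith)
      ((hi1.sub hi2).mono_set Set.Ioo_subset_Ioc_self) ?_ (hanti.mono hsub) ?_
      (M := h (a + α * (D / 2)) / w (D / 2)) ?_
    · intro r hr
      have hsubr : Set.Ioc (D / 2) r ⊆ Set.Ioc (D / 2) D := Set.Ioc_subset_Ioc_right hr.2
      have key := poincareConst_modelDensity_mul_le_of_le hN hD hs hφ hφ0 hr
      rw [intervalIntegral.integral_sub
        ((intervalIntegrable_iff_integrableOn_Ioc_of_le hr.1).mpr (hi1.mono_set hsubr))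
        ((intervalIntegrable_iff_integrableOn_Ioc_of_le hr.1).mpr (hi2.mono_set hsubr)),
        intervalIntegral.integral_const_mul]
      linarith
    · exact fun y hy => div_nonneg (hh _) (hwpos y ⟨(hsub hy).1, hy.2.le⟩).le
    · exact fun y hy => hanti hmid (hsub hy) hy.1.le
  set Q := fun x => (α ^ 2 * deriv f x ^ 2 - lam * (f x - f m) ^ 2) * h x with hQ
  have hcv : ∫ y in (D / 2)..D, (deriv φ y ^ 2 * w y - lam * (φ y ^ 2 * w y)) *
      (h (a + α * y) / w y) = ∫ y in (D / 2)..D, Q (a + α * y) := by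
    rw [intervalIntegral.integral_of_le (by linarith), intervalIntegral.integral_of_le
      (by linarith), integral_Ioc_eq_integral_Ioo, integral_Ioc_eq_integral_Ioo]
    refine setIntegral_congr_fun measurableSet_Ioo fun y hy => ?_
    have hwy := (hwpos y ⟨by linarith [hy.1], hy.2.le⟩).ne'
    have hφy : φ y = f (a + α * y) - f m := by simp only [hφdef, max_eq_left hy.1.le]
    simp only [hdφ y hy, hφy, hQ]
    field_simp
  rw [hcv, intervalIntegral.integral_comp_add_mul Q hα0.ne' a, hmα, hbα, smul_eq_mul] at hmain
  have hQ0 : 0 ≤ ∫ x in m..b, Q x := nonneg_of_mul_nonneg_right hmain (inv_pos.mpr hα0)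
  have hj1 : IntervalIntegrable (fun x => deriv f x ^ 2 * h x) volume m b :=
    (intervalIntegrable_iff_integrableOn_Ioc_of_le hmb).mpr
      (hf.integrableOn_deriv_sq_mul hhi.integrableOn)
  have hj2 : IntervalIntegrable (fun x => (f x - f m) ^ 2 * h x) volume m b :=
    hhi.intervalIntegrable.continuousOn_mul
      ((hf.continuous.sub continuous_const).pow 2).continuousOn
  have hQe : ∫ x in m..b, Q x = α ^ 2 * (∫ x in m..b, deriv f x ^ 2 * h x) -
      lam * ∫ x in m..b, (f x - f m) ^ 2 * h x := by
    rw [← intervalIntegral.integral_const_mul, ← intervalIntegral.integral_const_mul,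
      ← intervalIntegral.integral_sub (hj1.const_mul _) (hj2.const_mul _)]
    congr 1
    ext x
    simp only [hQ]
    ring
  have hnn : 0 ≤ ∫ x in m..b, deriv f x ^ 2 * h x :=
    intervalIntegral.integral_nonneg hmb fun x _ => mul_nonneg (sq_nonneg _) (hh x)
  have hα2 : α ^ 2 ≤ 1 := by nlinarith
  nlinarith

/-- Poincaré inequality, with the constant of the model density, for densities satisfying the
two one-sided contraction bounds on an interval. -/
lemma poincareConst_mul_le_of_contraction {K N D α a b : ℝ} (hN : 1 < N) (hD : 0 < D)
    (hs : ∀ θ ∈ Set.Ioc 0 D, 0 < sKappa (K / (N - 1)) θ) (hα : α ∈ Set.Ioc (0 : ℝ) 1)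
    (hratio : ∀ x y, 0 < x → x ≤ y → sKappa (K / (N - 1)) (α * y) * sKappa (K / (N - 1)) x ≤
      sKappa (K / (N - 1)) (α * x) * sKappa (K / (N - 1)) y)
    (hab : b - a = α * D) {h : ℝ → ℝ} (hh : ∀ x, 0 ≤ h x) (hhi : Integrable h)
    (hl : ∀ x y, a < x → x ≤ y → y < b →
      (sKappa (K / (N - 1)) (x - a) / sKappa (K / (N - 1)) (y - a)) ^ (N - 1) * h y ≤ h x)
    (hr : ∀ x y, a < x → x ≤ y → y < b →
      (sKappa (K / (N - 1)) (b - y) / sKappa (K / (N - 1)) (b - x)) ^ (N - 1) * h x ≤ h y)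
    {f : ℝ → ℝ} {C : NNReal} (hf : LipschitzWith C f) (hmean : ∫ x in a..b, f x * h x = 0) :
    poincareConst (modelDensity K N D) Set.univ * ∫ x in a..b, f x ^ 2 * h x ≤
      ∫ x in a..b, deriv f x ^ 2 * h x := by
  have hright := poincareConst_mul_le_right_half hN hD hs hα hratio hab hh hhi hl hf
  have hleft := poincareConst_mul_le_right_half (a := -b) (b := -a) (h := fun x => h (-x))
    (f := fun x => f (-x)) hN hD hs hα hratio (by linarith) (fun x => hh _) hhi.comp_neg
    (fun x y hx hxy hy => by
      have := hr (-y) (-x) (by linarith) (by linarith) (by linarith)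
      rwa [show b - -x = x - -b by ring, show b - -y = y - -b by ring] at this)
    (C := C * 1) (hf.comp LipschitzWith.id.neg)
  set lam := poincareConst (modelDensity K N D) Set.univ
  set m := (a + b) / 2 with hm
  have hma : (-b + -a) / 2 = -m := by rw [hm]; ring
  simp only [hma, neg_neg, deriv_comp_neg, neg_sq] at hleft
  rw [intervalIntegral.integral_comp_neg (fun x => (f x - f m) ^ 2 * h x),
    intervalIntegral.integral_comp_neg (fun x => deriv f x ^ 2 * h x), neg_neg, neg_neg] at hleft
  have hi : ∀ {q : ℝ → ℝ}, Continuous q → ∀ c d,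
      IntervalIntegrable (fun x => q x * h x) volume c d := fun hq c d =>
    hhi.intervalIntegrable.continuousOn_mul hq.continuousOn
  have hid : ∀ c d, IntervalIntegrable (fun x => deriv f x ^ 2 * h x) volume c d := fun c d =>
    ⟨hf.integrableOn_deriv_sq_mul hhi.integrableOn, hf.integrableOn_deriv_sq_mul hhi.integrableOn⟩
  have hfc := hf.continuous
  have hsq : Continuous fun x => (f x - f m) ^ 2 := by fun_prop
  have hsq' : Continuous fun x => f x ^ 2 := by fun_prop
  have hsplit := intervalIntegral.integral_add_adjacent_intervals (hid a m) (hid m b)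
  have hsplit' := intervalIntegral.integral_add_adjacent_intervals (hi hsq a m) (hi hsq m b)
  have hh1 : IntervalIntegrable h volume a b := hhi.intervalIntegrable
  have hexp : ∫ x in a..b, (f x - f m) ^ 2 * h x =
      (∫ x in a..b, f x ^ 2 * h x) + f m ^ 2 * ∫ x in a..b, h x := by
    have : ∀ x, (f x - f m) ^ 2 * h x =
        f x ^ 2 * h x - 2 * f m * (f x * h x) + f m ^ 2 * h x := fun x => by ring
    simp only [this]
    rw [intervalIntegral.integral_add ((hi hsq' a b).sub ((hi hfc a b).const_mul _))
      (hh1.const_mul _), intervalIntegral.integral_sub (hi hsq' a b)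
      ((hi hfc a b).const_mul _), intervalIntegral.integral_const_mul,
      intervalIntegral.integral_const_mul, hmean]
    ring
  have hba : a ≤ b := by nlinarith [hα.1]
  have h0 : 0 ≤ f m ^ 2 * ∫ x in a..b, h x :=
    mul_nonneg (sq_nonneg _) (intervalIntegral.integral_nonneg hba fun x _ => hh x)
  have hnn : 0 ≤ lam := poincareConst_nonneg (modelDensity_nonneg fun θ hθ => (hs θ hθ).le) _
  rw [← hsplit]
  have : lam * ∫ x in a..b, f x ^ 2 * h x ≤ lam * ∫ x in a..b, (f x - f m) ^ 2 * h x :=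
    mul_le_mul_of_nonneg_left (by linarith) hnn
  rw [← hsplit', mul_add] at this
  linarith

lemma IsMCPDensity.mul_le_of_mem {K N : ℝ} {h : ℝ → ℝ} (hMCP : IsMCPDensity K N h) {z y x : ℝ}
    (hz : z ∈ measSupport h) (hy : y ∈ measSupport h) {s : ℝ} (hs : s ∈ Set.Ioc (0 : ℝ) 1)
    (hx : x = z + s * (y - z)) :
    (sKappa (K / (N - 1)) |x - z| / sKappa (K / (N - 1)) |y - z|) ^ (N - 1) * h y ≤ h x := by
  have := (hMCP.2.2 y hy z hz).2 (1 - s) ⟨by linarith [hs.2], by linarith [hs.1]⟩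
  rw [sub_sub_cancel, show (1 - s) * z + s * y = x by rw [hx]; ring, abs_sub_comm z y] at this
  rwa [show |x - z| = s * |y - z| by rw [hx, add_sub_cancel_left, abs_mul, abs_of_pos hs.1]]

lemma IsMCPDensity.sKappa_abs_sub_pos {K N : ℝ} (hN : 1 < N) {h : ℝ → ℝ}
    (hMCP : IsMCPDensity K N h) {z y : ℝ} (hz : z ∈ measSupport h) (hy : y ∈ measSupport h)
    {θ : ℝ} (hθ : θ ∈ Set.Ioc 0 |y - z|) : 0 < sKappa (K / (N - 1)) θ := by
  have hN' : 0 < N - 1 := by linarith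
  refine sKappa_pos hθ.1 fun hκ => hθ.2.trans_lt ((hMCP.2.2 z hz y hy).1 ?_ ?_)
  · rwa [div_pos_iff_of_pos_right hN'] at hκ
  · rintro rfl
    simp only [sub_self, abs_zero] at hθ
    linarith [hθ.1, hθ.2]

lemma measSupport_eq_support (h : ℝ → ℝ) :
    measSupport h = (volume.withDensity fun y => ENNReal.ofReal (h y)).support := by
  ext x
  rw [Measure.mem_support_iff_forall]
  constructor
  · intro hx U hU
    obtain ⟨ε, hε, hεU⟩ := Metric.mem_nhds_iff.mp hU
    exact (hx ε hε).trans_le (measure_mono hεU)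
  · exact fun hx ε hε => hx _ (Metric.ball_mem_nhds x hε)

lemma IsMCPDensity.withDensity_eq_zero_iff {K N : ℝ} {h : ℝ → ℝ} (hMCP : IsMCPDensity K N h)
    (s : Set ℝ) : (volume.withDensity fun y => ENNReal.ofReal (h y)) s = 0 ↔
      ∀ᵐ x, x ∈ s → h x = 0 := by
  rw [withDensity_apply_eq_zero' hMCP.2.1.aestronglyMeasurable.aemeasurable.ennreal_ofReal,
    measure_eq_zero_iff_ae_notMem]
  refine eventually_congr (Eventually.of_forall fun x => ?_)
  have h0 := hMCP.1 x
  simp only [Set.mem_inter_iff, Set.mem_ofPred_eq, ne_eq, ENNReal.ofReal_eq_zero, not_and, not_le]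
  constructor
  · intro hx hxs
    by_contra hne
    exact hx (lt_of_le_of_ne h0 (Ne.symm hne)) hxs
  · exact fun hx hpos hxs => hpos.ne' (hx hxs)

/-- The support of an `MCP` density is a nondegenerate compact interval. -/
lemma IsMCPDensity.exists_Ioo_subset {K N : ℝ} (hN : 1 < N) {h : ℝ → ℝ}
    (hMCP : IsMCPDensity K N h) (hne : (measSupport h).Nonempty)
    (hbdd : Bornology.IsBounded (measSupport h)) :
    ∃ a ∈ measSupport h, ∃ b ∈ measSupport h, a < b ∧ Set.Ioo a b ⊆ measSupport h ∧
      (∀ᵐ x, x ∉ Set.Icc a b → h x = 0) ∧ ¬ ∀ᵐ x, h x = 0 := by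
  set S := measSupport h with hS
  set μ := volume.withDensity fun y => ENNReal.ofReal (h y) with hμ
  have hSμ : S = μ.support := measSupport_eq_support h
  have hclosed : IsClosed S := hSμ ▸ Measure.isClosed_support
  have hcomp : IsCompact S := Metric.isCompact_of_isClosed_isBounded hclosed hbdd
  have hnull : ∀ᵐ x, x ∉ S → h x = 0 := by
    have : μ Sᶜ = 0 := hSμ ▸ Measure.measure_compl_support
    exact (hMCP.withDensity_eq_zero_iff _).mp this
  have hnz : ¬ ∀ᵐ x, h x = 0 := by
    intro h0
    obtain ⟨x, hx⟩ := hne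
    refine (hx 1 one_pos).ne' ((hMCP.withDensity_eq_zero_iff _).mpr ?_)
    filter_upwards [h0] with x hx _ using hx
  have hIcc : ∀ x ∈ S, x ∈ Set.Icc (sInf S) (sSup S) := fun x hx =>
    ⟨csInf_le hcomp.bddBelow hx, le_csSup hcomp.bddAbove hx⟩
  have haS := hcomp.sInf_mem hne
  have hbS := hcomp.sSup_mem hne
  have hlt : sInf S < sSup S := by
    by_contra hge
    refine hnz ?_
    filter_upwards [hnull, measure_eq_zero_iff_ae_notMem.mp
      (Real.volume_singleton (a := sInf S))] with x hx hxa
    refine hx fun hxS => hxa ?_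
    have := hIcc x hxS
    exact le_antisymm (this.2.trans (not_lt.mp hge)) this.1
  refine ⟨sInf S, haS, sSup S, hbS, hlt, ?_, ?_, hnz⟩
  · obtain ⟨x₀, hx₀S, hx₀⟩ : ∃ x₀ ∈ S, h x₀ ≠ 0 := by
      by_contra! hcon
      refine hnz ?_
      filter_upwards [hnull] with x hx
      by_cases hxS : x ∈ S
      exacts [hcon x hxS, hx hxS]
    have hx₀pos : 0 < h x₀ := lt_of_le_of_ne (hMCP.1 x₀) (Ne.symm hx₀)
    have hpos : ∀ z ∈ S, ∀ s ∈ Set.Ioc (0 : ℝ) 1, z ≠ x₀ → 0 < h (z + s * (x₀ - z)) := by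
      intro z hz s hs hzx
      have habs : 0 < |x₀ - z| := abs_pos.mpr (sub_ne_zero.mpr hzx.symm)
      refine lt_of_lt_of_le ?_ (hMCP.mul_le_of_mem hz hx₀S hs rfl)
      rw [add_sub_cancel_left, abs_mul, abs_of_pos hs.1]
      have h1 := hMCP.sKappa_abs_sub_pos hN hz hx₀S ⟨habs, le_rfl⟩
      have h2 := hMCP.sKappa_abs_sub_pos hN hz hx₀S (θ := s * |x₀ - z|)
        ⟨mul_pos hs.1 habs, mul_le_of_le_one_left habs.le hs.2⟩
      exact mul_pos (Real.rpow_pos_of_pos (div_pos h2 h1) _) hx₀pos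
    have hopen : ∀ U : Set ℝ, IsOpen U → (∀ x ∈ U, 0 < h x) → U ⊆ S := by
      intro U hU hUpos c hc ε hε
      rw [pos_iff_ne_zero]
      intro h0
      rw [hMCP.withDensity_eq_zero_iff] at h0
      have hV : IsOpen (U ∩ Metric.ball c ε) := hU.inter Metric.isOpen_ball
      have : volume (U ∩ Metric.ball c ε) = 0 := by
        rw [measure_eq_zero_iff_ae_notMem]
        filter_upwards [h0] with x hx hxV
        exact (hUpos x hxV.1).ne' (hx hxV.2)
      exact (hV.measure_pos volume ⟨c, hc, Metric.mem_ball_self hε⟩).ne' this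
    intro c hc
    rcases lt_trichotomy x₀ c with hlt' | heq | hgt
    · refine hopen (Set.Ioo x₀ (sSup S)) isOpen_Ioo (fun y hy => ?_) ⟨hlt', hc.2⟩
      have hd : 0 < sSup S - x₀ := by linarith [hy.1, hy.2]
      have := hpos _ hbS ((sSup S - y) / (sSup S - x₀))
        ⟨div_pos (by linarith [hy.2]) hd, (div_le_one hd).mpr (by linarith [hy.1])⟩ (by linarith)
      convert this using 2
      field_simp
      ring
    · exact heq ▸ hx₀S
    · refine hopen (Set.Ioo (sInf S) x₀) isOpen_Ioo (fun y hy => ?_) ⟨hc.1, hgt⟩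
      have hd : 0 < x₀ - sInf S := by linarith [hy.1, hy.2]
      have := hpos _ haS ((y - sInf S) / (x₀ - sInf S))
        ⟨div_pos (by linarith [hy.1]) hd, (div_le_one hd).mpr (by linarith [hy.2])⟩ (by linarith)
      convert this using 2
      field_simp
      ring
  · filter_upwards [hnull] with x hx hxI
    exact hx fun hxS => hxI (hIcc x hxS)

lemma IsMCPDensity.poincareConst_modelDensity_le {K N D α a b : ℝ} (hN : 1 < N) (hD : 0 < D)
    (hs : ∀ θ ∈ Set.Ioc 0 D, 0 < sKappa (K / (N - 1)) θ) (hα : α ∈ Set.Ioc (0 : ℝ) 1)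
    (hratio : ∀ x y, 0 < x → x ≤ y → sKappa (K / (N - 1)) (α * y) * sKappa (K / (N - 1)) x ≤
      sKappa (K / (N - 1)) (α * x) * sKappa (K / (N - 1)) y)
    (hab : b - a = α * D) {h : ℝ → ℝ} (hMCP : IsMCPDensity K N h) (ha : a ∈ measSupport h)
    (hb : b ∈ measSupport h) (hIoo : Set.Ioo a b ⊆ measSupport h)
    (hnull : ∀ᵐ x, x ∉ Set.Icc a b → h x = 0) (hnz : ¬ ∀ᵐ x, h x = 0) :
    poincareConst (modelDensity K N D) Set.univ ≤ poincareConst h Set.univ := by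
  have hlt : a < b := by nlinarith [hα.1]
  have hh := hMCP.1
  have hind : ∀ q : ℝ → ℝ, (fun x => q x * h x) =ᵐ[volume]
      (Set.Icc a b).indicator fun x => q x * h x := by
    intro q
    filter_upwards [hnull] with x hx
    by_cases hxI : x ∈ Set.Icc a b
    · rw [Set.indicator_of_mem hxI]
    · rw [Set.indicator_of_notMem hxI, hx hxI, mul_zero]
  have hint : ∀ q : ℝ → ℝ, ∫ x, q x * h x = ∫ x in a..b, q x * h x := by
    intro q
    rw [integral_congr_ae (hind q), integral_indicator measurableSet_Icc,
      integral_Icc_eq_integral_Ioc, intervalIntegral.integral_of_le hlt.le]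
  have hmulI : ∀ q : ℝ → ℝ, Continuous q → Integrable fun x => q x * h x := by
    intro q hq
    rw [integrable_congr (hind q), integrable_indicator_iff measurableSet_Icc]
    exact (hMCP.2.1.integrableOn_isCompact isCompact_Icc).continuousOn_mul hq.continuousOn
      isCompact_Icc
  have hhi : Integrable h := by simpa using hmulI (fun _ => 1) continuous_const
  have hl : ∀ x y, a < x → x ≤ y → y < b →
      (sKappa (K / (N - 1)) (x - a) / sKappa (K / (N - 1)) (y - a)) ^ (N - 1) * h y ≤ h x := by
    intro x y hx hxy hy
    have hd : 0 < y - a := by linarith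
    have := hMCP.mul_le_of_mem (x := x) ha (hIoo ⟨by linarith, hy⟩) (s := (x - a) / (y - a))
      ⟨div_pos (by linarith) hd, (div_le_one hd).mpr (by linarith)⟩ (by field_simp; ring)
    rwa [abs_of_pos hd, abs_of_pos (by linarith : 0 < x - a)] at this
  have hr : ∀ x y, a < x → x ≤ y → y < b →
      (sKappa (K / (N - 1)) (b - y) / sKappa (K / (N - 1)) (b - x)) ^ (N - 1) * h x ≤ h y := by
    intro x y hx hxy hy
    have hd : 0 < b - x := by linarith
    have := hMCP.mul_le_of_mem (x := y) hb (hIoo ⟨hx, by linarith⟩) (s := (b - y) / (b - x))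
      ⟨div_pos (by linarith) hd, (div_le_one hd).mpr (by linarith)⟩ (by field_simp; ring)
    rwa [abs_sub_comm, abs_sub_comm x b, abs_of_pos hd,
      abs_of_pos (by linarith : 0 < b - y)] at this
  refine le_csInf ?_ ?_
  · have hhpos : 0 < ∫ x, h x := by
      refine lt_of_le_of_ne (integral_nonneg hh) fun h0 => hnz ?_
      exact (integral_eq_zero_iff_of_nonneg hh hhi).mp h0.symm
    set e := (∫ x, x * h x) / ∫ x, h x with he
    have hlip : LipschitzWith (1 + 0) fun x : ℝ => x - e :=
      LipschitzWith.id.sub (LipschitzWith.const e)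
    have hsqi : Integrable fun x => (x - e) ^ 2 * h x := hmulI _ (by fun_prop)
    refine ⟨_, fun x => x - e, hlip.locLipschitzOn _, ?_, ?_, by simpa using hsqi, rfl⟩
    · simp only [Measure.restrict_univ, sub_mul]
      rw [integral_sub (hmulI (fun x => x) continuous_id) (hhi.const_mul e),
        integral_const_mul, he, div_mul_cancel₀ _ hhpos.ne', sub_self]
    · simp only [Measure.restrict_univ]
      have hnn : ∀ x, 0 ≤ (x - e) ^ 2 * h x := fun x => mul_nonneg (sq_nonneg _) (hh x)
      refine lt_of_le_of_ne (integral_nonneg hnn) fun h0 => hnz ?_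
      filter_upwards [(integral_eq_zero_iff_of_nonneg hnn hsqi).mp h0.symm,
        measure_eq_zero_iff_ae_notMem.mp (Real.volume_singleton (a := e))] with x hx hxe
      exact (mul_eq_zero.mp hx).resolve_left (pow_ne_zero 2 (sub_ne_zero.mpr hxe))
  · rintro r ⟨f, hf, hmean, hpos, -, rfl⟩
    simp only [Measure.restrict_univ] at hmean hpos ⊢
    have hloc := hf.locallyLipschitz
    rw [le_div_iff₀ hpos]
    obtain ⟨C, hC⟩ := LocallyLipschitzOn.exists_lipschitzOnWith_of_compact
      (isCompact_Icc (a := a) (b := b)) hloc.locallyLipschitzOn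
    obtain ⟨g, hg, hfg⟩ := hC.extend_real
    have hslope : ∫ x, slopeOn f Set.univ x ^ 2 * h x = ∫ x in a..b, deriv g x ^ 2 * h x := by
      rw [← hint, integral_congr_ae (g := fun x => deriv g x ^ 2 * h x)]
      filter_upwards [hloc.ae_slopeOn_sq, hnull,
        measure_eq_zero_iff_ae_notMem.mp (Real.volume_singleton (a := a)),
        measure_eq_zero_iff_ae_notMem.mp (Real.volume_singleton (a := b))] with x h1 h2 h3 h4
      by_cases hxI : x ∈ Set.Icc a b
      · have hnhds : Set.Icc a b ∈ nhds x :=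
          Icc_mem_nhds (lt_of_le_of_ne hxI.1 (Ne.symm h3)) (lt_of_le_of_ne hxI.2 h4)
        have : f =ᶠ[nhds x] g := by
          filter_upwards [hnhds] with y hy using hfg hy
        rw [h1, this.deriv_eq]
      · rw [h2 hxI, mul_zero, mul_zero]
    have hcongr : ∀ n : ℕ, ∫ x in a..b, f x ^ n * h x = ∫ x in a..b, g x ^ n * h x := by
      intro n
      refine intervalIntegral.integral_congr fun x hx => ?_
      rw [Set.uIcc_of_le hlt.le] at hx
      simp only [hfg hx]
    rw [hslope, hint fun x => f x ^ 2, hcongr 2]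
    rw [hint] at hmean
    have hc1 := hcongr 1
    simp only [pow_one] at hc1
    exact poincareConst_mul_le_of_contraction hN hD hs hα hratio hab hh hhi hl hr hg
      (hc1.symm.trans hmean)

/-- Spectral-gap comparison for `MCP(K,N)` densities of diameter at most `D`
(Corollary 4.10). -/
theorem stmt_9 (K N D : ℝ) (hN : 1 < N) (hD : 0 < D)
    (h : ℝ → ℝ) (hMCP : IsMCPDensity K N h)
    (hne : (measSupport h).Nonempty)
    (hbdd : Bornology.IsBounded (measSupport h))
    (hdiam : Metric.diam (measSupport h) ≤ D) :
    (K ≤ 0 → poincareConst (modelDensity K N D) Set.univ ≤ poincareConst h Set.univ) ∧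
    (0 < K →
      sInf ((fun D' => poincareConst (modelDensity K N D') Set.univ) ''
          Set.Ioc 0 (min D (Real.pi / Real.sqrt (K / (N - 1)))))
        ≤ poincareConst h Set.univ) := by
  have hN' : 0 < N - 1 := by linarith
  obtain ⟨a, ha, b, hb, hlt, hIoo, hnull, hnz⟩ := hMCP.exists_Ioo_subset hN hne hbdd
  have hd : 0 < b - a := by linarith
  have hdD : b - a ≤ D := by
    have := Metric.dist_le_diam_of_mem hbdd hb ha
    rw [Real.dist_eq, abs_of_pos hd] at this
    linarith
  constructor
  · intro hK
    have hκ : K / (N - 1) ≤ 0 := div_nonpos_of_nonpos_of_nonneg hK hN'.le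
    have hα : (b - a) / D ∈ Set.Ioc (0 : ℝ) 1 := ⟨div_pos hd hD, (div_le_one hD).mpr hdD⟩
    exact hMCP.poincareConst_modelDensity_le hN hD
      (fun θ hθ => sKappa_pos hθ.1 fun h0 => absurd h0 hκ.not_gt) hα
      (fun x y hx hxy => sKappa_mul_mul_le hκ hα.1.le hα.2 hx hxy)
      (div_mul_cancel₀ _ hD.ne').symm ha hb hIoo hnull hnz
  · intro hK
    have hdiamlt := (hMCP.2.2 a ha b hb).1 hK hlt.ne
    rw [abs_of_pos hd] at hdiamlt
    refine (csInf_le ?_ (Set.mem_image_of_mem _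
      (show b - a ∈ Set.Ioc 0 _ from ⟨hd, le_min hdD hdiamlt.le⟩))).trans ?_
    · refine ⟨0, ?_⟩
      rintro _ ⟨D', hD', rfl⟩
      exact poincareConst_nonneg (modelDensity_nonneg fun θ hθ => sKappa_nonneg hθ.1.le
        fun _ => hθ.2.trans (hD'.2.trans (min_le_right _ _))) _
    · exact hMCP.poincareConst_modelDensity_le hN hd
        (fun θ hθ => sKappa_pos hθ.1 fun _ => hθ.2.trans_lt hdiamlt) ⟨one_pos, le_rfl⟩
        (fun x y _ _ => by rw [one_mul, one_mul, mul_comm]) (one_mul _).symm ha hb hIoo hnull hnz
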